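/- Let b > 1 and 0 < β₀ < β_∞ < 1/3 with 1 + β₀ − (b+2)β_∞ ≥ 0. Define for λ ≥ 1 the quantities η_j = λ^{bβ₀ − (b−1)β_∞ − β_j} and μ_j as in the iteration scheme (μ_j = λ^{1−β_j} for j ≥ 2, μ_j = λ^{(1−β₀)(b+1)/(2b) + (b−1)β_∞/2} for j ≤ 1), with β_j = β₀/b^j + (1−1/b^j)β_∞. Then the ratio η_j/μ_j is nonincreasing in j: η_{j'}/μ_{j'} ≤ η_j/μ_j whenever j ≤ j'. -/

import Mathlib

theorem statement7 (b β0 βinf lam : ℝ) (hb : 1 < b) (h0 : 0 < β0) (h1 : β0 < βinf)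
    (hinf : βinf < 1/3) (hcond : 1 + β0 - (b + 2) * βinf ≥ 0) (hlam : 1 ≤ lam)
    (β μ η : ℕ → ℝ)
    (hβ : ∀ j, β j = β0 / b ^ j + (1 - 1 / b ^ j) * βinf)
    (hμ : ∀ j, μ j = if 2 ≤ j then lam ^ (1 - β j)
        else lam ^ ((1 - β0) * (b + 1) / (2 * b) + (b - 1) * βinf / 2))
    (hη : ∀ j, η j = lam ^ (b * β0 - (b - 1) * βinf - β j)) :
    ∀ j j', j ≤ j' → η j' / μ j' ≤ η j / μ j := by
  have hlam_pos : 0 < lam := by linarith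
  have hb_pos : 0 < b := by linarith
  have hβ_zero_one : β 0 ≤ β 1 := by
    have hdiff : β 1 - β 0 = (1 - 1 / b) * (βinf - β0) := by
      rw [hβ, hβ]
      ring
    have hb_inv : 1 / b ≤ 1 := (div_le_one hb_pos).2 hb.le
    have := mul_nonneg (sub_nonneg.2 hb_inv) (sub_nonneg.2 h1.le)
    linarith
  have hexp_one : (1 - β0) * (b + 1) / (2 * b) + (b - 1) * βinf / 2 + β 1 ≤ 1 := by
    have hdiff : 1 - ((1 - β0) * (b + 1) / (2 * b) + (b - 1) * βinf / 2 + β 1)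
        = (b - 1) * (1 + β0 - (b + 2) * βinf) / (2 * b) := by
      rw [hβ]
      field_simp
      ring
    have : 0 ≤ (b - 1) * (1 + β0 - (b + 2) * βinf) / (2 * b) :=
      div_nonneg (mul_nonneg (by linarith) hcond) (by linarith)
    linarith
  suffices h : Antitone fun j => η j / μ j from fun _ _ hj => h hj
  refine antitone_nat_of_succ_le fun j => ?_
  match j with
  | 0 =>
    simp only [hη, hμ, Nat.reduceAdd, Nat.reduceLeDiff, if_false, ← Real.rpow_sub hlam_pos]
    exact Real.rpow_le_rpow_of_exponent_le hlam (by linarith)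
  | 1 =>
    simp only [hη, hμ, Nat.reduceAdd, Nat.reduceLeDiff, le_refl, if_true, if_false,
      ← Real.rpow_sub hlam_pos]
    exact Real.rpow_le_rpow_of_exponent_le hlam (by linarith)
  | k + 2 =>
    rw [hη, hμ, hη, hμ, if_pos (by omega), if_pos (by omega), ← Real.rpow_sub hlam_pos,
      ← Real.rpow_sub hlam_pos]
    exact Real.rpow_le_rpow_of_exponent_le hlam (by linarith)
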